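/- Let R be an associative G-graded algebra over a field F, let V be a graded simple faithful left R-module, let D = End_R^gr(V), and let ψ: R → End_D^gr(V) be the homomorphism of graded algebras with ψ(r)(v) = rv for all r ∈ R, v ∈ V. If R satisfies an ordinary polynomial identity, then V is finite-dimensional as a graded vector space over D; moreover, in that case End_D^gr(V) = End_D(V) and ψ is an isomorphism of graded algebras. -/

import Mathlib

noncomputable section

section Setup

variable (F : Type*) [Field F] {G : Type*} [Group G] [DecidableEq G]
variable {R : Type*} [Ring R] [Algebra F R]
variable {V : Type*} [AddCommGroup V] [Module F V] [Module R V] [IsScalarTower F R V]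
  [SMulCommClass R F V]

/-- `ℛ` is a `G`-grading of the associative `F`-algebra `R`. -/
def IsAlgGrading (ℛ : G → Submodule F R) : Prop :=
  DirectSum.IsInternal ℛ ∧ ∀ (g h : G), ∀ r ∈ ℛ g, ∀ s ∈ ℛ h, r * s ∈ ℛ (g * h)

/-- `𝒱` makes `V` a `G`-graded module over the `G`-graded algebra `(R, ℛ)`. -/
def IsModuleGrading (ℛ : G → Submodule F R) (𝒱 : G → Submodule F V) : Prop :=
  DirectSum.IsInternal 𝒱 ∧ ∀ (g h : G), ∀ r ∈ ℛ g, ∀ x ∈ 𝒱 h, r • x ∈ 𝒱 (g * h)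

/-- `V` is a graded simple `R`-module. -/
def IsGradedSimpleModule (𝒱 : G → Submodule F V) : Prop :=
  (∃ (r : R) (x : V), r • x ≠ 0) ∧
    ∀ W : Submodule R V,
      (W.restrictScalars F = ⨆ g, W.restrictScalars F ⊓ 𝒱 g) → W = ⊥ ∨ W = ⊤

/-- the degree-`h` component of `End_R(V)` (right-degree convention, corresponding to `V` being a
right module over `D`): `R`-linear maps sending `𝒱 g` into `𝒱 (g*h)`. -/
def DGrading (𝒱 : G → Submodule F V) (h : G) : Submodule F (Module.End R V) where
  carrier := {φ | ∀ g : G, ∀ x ∈ 𝒱 g, φ x ∈ 𝒱 (g * h)}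
  add_mem' := fun hf hg g x hx => (𝒱 _).add_mem (hf g x hx) (hg g x hx)
  zero_mem' := fun g x hx => (𝒱 _).zero_mem
  smul_mem' := fun c f hf g x hx => (𝒱 _).smul_mem c (hf g x hx)

/-- `D = End_R^gr(V)`: sums of homogeneous `R`-module endomorphisms of `V`. -/
def Dgr (𝒱 : G → Submodule F V) : Submodule F (Module.End R V) :=
  ⨆ h : G, DGrading F (R := R) 𝒱 h

/-- `End_D(V)`: the `F`-linear endomorphisms of `V` commuting with every element of
`D = End_R^gr(V)`, i.e. the `D`-linear endomorphisms of `V`. -/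
def EndD (𝒱 : G → Submodule F V) : Submodule F (Module.End F V) where
  carrier := {f | ∀ d : Module.End R V, d ∈ Dgr F (R := R) 𝒱 → ∀ x : V, f (d x) = d (f x)}
  add_mem' := by
    intro f g hf hg d hd x
    simp [LinearMap.add_apply, hf d hd x, hg d hd x]
  zero_mem' := by intro d hd x; simp
  smul_mem' := by
    intro c f hf d hd x
    simp [LinearMap.smul_apply, hf d hd x, map_smul]

/-- the degree-`h` component of `End_F(V)` (left-degree convention): maps sending `𝒱 g` into
`𝒱 (h*g)`. -/
def endVGrading (𝒱 : G → Submodule F V) (h : G) : Submodule F (Module.End F V) where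
  carrier := {φ | ∀ g : G, ∀ x ∈ 𝒱 g, φ x ∈ 𝒱 (h * g)}
  add_mem' := fun hf hg g x hx => (𝒱 _).add_mem (hf g x hx) (hg g x hx)
  zero_mem' := fun g x hx => (𝒱 _).zero_mem
  smul_mem' := fun c f hf g x hx => (𝒱 _).smul_mem c (hf g x hx)

/-- `R` satisfies an ordinary polynomial identity. -/
def SatisfiesPI : Prop :=
  ∃ f : FreeAlgebra F ℕ, f ≠ 0 ∧ ∀ v : ℕ → R, FreeAlgebra.lift F v f = 0

end Setup

section Helpers

variable {F : Type*} [Field F] {G : Type*} [Group G] [DecidableEq G]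
variable {R : Type*} [Ring R] [Algebra F R]
variable {V : Type*} [AddCommGroup V] [Module F V] [Module R V] [IsScalarTower F R V]
  [SMulCommClass R F V]

theorem aux_exists_proj {M : Type*} [AddCommGroup M] [Module F M] (𝒱 : G → Submodule F M)
    (h : DirectSum.IsInternal 𝒱) :
    ∃ p : G → M →ₗ[F] M, (∀ g x, p g x ∈ 𝒱 g) ∧ (∀ g, ∀ x ∈ 𝒱 g, p g x = x) ∧
      (∀ g k, g ≠ k → ∀ x ∈ 𝒱 k, p g x = 0) ∧
      (∀ x, ∃ S : Finset G, x = ∑ g ∈ S, p g x) := by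
  classical
  letI := h.chooseDecomposition
  refine ⟨fun g => (𝒱 g).subtype ∘ₗ DirectSum.component F G (fun i => 𝒱 i) g ∘ₗ
    (DirectSum.decomposeLinearEquiv 𝒱).toLinearMap, ?_, ?_, ?_, ?_⟩
  · intro g x
    exact Subtype.property _
  · intro g x hx
    exact DirectSum.decompose_of_mem_same 𝒱 hx
  · intro g k hgk x hx
    exact DirectSum.decompose_of_mem_ne 𝒱 hx hgk.symm
  · intro x
    exact ⟨_, (DirectSum.sum_support_decompose 𝒱 x).symm⟩

/-- The key compatible projections. -/
theorem aux_projs (ℛ : G → Submodule F R) (𝒱 : G → Submodule F V)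
    (hR : IsAlgGrading F ℛ) (hV : IsModuleGrading F ℛ 𝒱) :
    ∃ (q : G → R →ₗ[F] R) (p : G → V →ₗ[F] V),
      (∀ g x, q g x ∈ ℛ g) ∧ (∀ x, ∃ S : Finset G, x = ∑ g ∈ S, q g x) ∧
      (∀ g x, p g x ∈ 𝒱 g) ∧ (∀ g, ∀ x ∈ 𝒱 g, p g x = x) ∧
      (∀ x, ∃ S : Finset G, x = ∑ g ∈ S, p g x) ∧
      (∀ g h, ∀ x ∈ 𝒱 h, ∀ r : R, p (g * h) (r • x) = q g r • x) := by
  obtain ⟨q, hq1, hq2, hq3, hq4⟩ := aux_exists_proj ℛ hR.1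
  obtain ⟨p, hp1, hp2, hp3, hp4⟩ := aux_exists_proj 𝒱 hV.1
  refine ⟨q, p, hq1, hq4, hp1, hp2, hp4, ?_⟩
  intro g h x hx r
  have hr : r ∈ ⨆ g, ℛ g := by rw [hR.1.submodule_iSup_eq_top]; trivial
  induction hr using Submodule.iSup_induction' with
  | mem k r hr =>
    by_cases hgk : g = k
    · subst hgk
      rw [hq2 g r hr, hp2 _ _ (hV.2 _ _ r hr x hx)]
    · rw [hq3 g k hgk r hr, hp3 (g * h) (k * h) (by simpa using hgk) _ (hV.2 _ _ r hr x hx),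
        zero_smul]
  | zero => simp
  | add a b _ _ ha hb => rw [add_smul, map_add, ha, hb, map_add, add_smul]

/-- annihilator of `v 0, …, v (n-1)` -/
def auxAnn (R : Type*) [Ring R] {V : Type*} [AddCommGroup V] [Module R V] (n : ℕ) (v : ℕ → V) :
    Submodule R R where
  carrier := {r | ∀ i < n, r • v i = 0}
  add_mem' := by
    intro a b ha hb i hi
    rw [add_smul, ha i hi, hb i hi, add_zero]
  zero_mem' := by intro i _; simp
  smul_mem' := by
    intro c x hx i hi
    rw [smul_eq_mul, mul_smul, hx i hi, smul_zero]

theorem aux_transitive (ℛ : G → Submodule F R) (𝒱 : G → Submodule F V)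
    (hR : IsAlgGrading F ℛ) (hV : IsModuleGrading F ℛ 𝒱)
    (hsimple : IsGradedSimpleModule F (R := R) 𝒱)
    (n : ℕ) (v : ℕ → V) (γ : ℕ → G) (hv : ∀ i < n, v i ∈ 𝒱 (γ i))
    (x : V) (h : G) (hx : x ∈ 𝒱 h) (r₀ : R) (hr₀ : r₀ ∈ auxAnn R n v) (hne : r₀ • x ≠ 0) (w : V) :
    ∃ r ∈ auxAnn R n v, r • x = w := by
  obtain ⟨q, p, hq1, hq4, hp1, hp2, hp4, hqp⟩ := aux_projs ℛ 𝒱 hR hV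
  have hann : ∀ r ∈ auxAnn R n v, ∀ g, q g r ∈ auxAnn R n v := by
    intro r hr g i hi
    rw [← hqp g (γ i) (v i) (hv i hi) r, hr i hi, map_zero]
  let W : Submodule R V := (auxAnn R n v).map (LinearMap.toSpanSingleton R V x)
  have hW : ∀ y, y ∈ W ↔ ∃ r ∈ auxAnn R n v, r • x = y := by
    intro y
    simp [W, Submodule.mem_map, LinearMap.toSpanSingleton_apply]
  have hWg : W.restrictScalars F = ⨆ g, W.restrictScalars F ⊓ 𝒱 g := by
    apply le_antisymm
    · intro y hy
      obtain ⟨r, hr, rfl⟩ := (hW y).1 hy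
      obtain ⟨S, hS⟩ := hq4 r
      rw [hS, Finset.sum_smul]
      refine Submodule.sum_mem _ fun g _ => ?_
      refine Submodule.mem_iSup_of_mem (g * h) ⟨?_, hV.2 _ _ _ (hq1 g r) _ hx⟩
      exact (hW _).2 ⟨_, hann r hr g, rfl⟩
    · exact iSup_le fun g => inf_le_left
  rcases hsimple.2 W hWg with h0 | h1
  · exfalso
    apply hne
    have : r₀ • x ∈ W := (hW _).2 ⟨r₀, hr₀, rfl⟩
    rw [h0] at this
    simpa using this
  · rw [← hW, h1]; exact Submodule.mem_top

def auxSpan (F : Type*) [Field F] {G : Type*} [Group G] [DecidableEq G]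
    (R : Type*) [Ring R] [Algebra F R]
    {V : Type*} [AddCommGroup V] [Module F V] [Module R V] [IsScalarTower F R V]
    [SMulCommClass R F V] (𝒱 : G → Submodule F V) (n : ℕ) (v : ℕ → V) (w : V) : Prop :=
  ∃ d : ℕ → Module.End R V, (∀ i, d i ∈ Dgr F (R := R) 𝒱) ∧ w = ∑ i ∈ Finset.range n, d i (v i)

theorem aux_closure (ℛ : G → Submodule F R) (𝒱 : G → Submodule F V)
    (hR : IsAlgGrading F ℛ) (hV : IsModuleGrading F ℛ 𝒱)
    (hsimple : IsGradedSimpleModule F (R := R) 𝒱) (v : ℕ → V) (γ : ℕ → G) (n : ℕ) :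
    (∀ i < n, v i ∈ 𝒱 (γ i)) → 
    ∀ (x : V) (h : G), x ∈ 𝒱 h → (∀ r ∈ auxAnn R n v, r • x = 0) → auxSpan F R 𝒱 n v x := by
  induction n with
  | zero =>
    intro _ x h _ hr
    refine ⟨0, fun i => Submodule.zero_mem _, ?_⟩
    have := hr 1 (by intro i hi; omega)
    simpa using this
  | succ n ih =>
    intro hv x h hx hann
    have hv' : ∀ i < n, v i ∈ 𝒱 (γ i) := fun i hi => hv i (by omega)
    by_cases hc : ∀ r ∈ auxAnn R n v, r • v n = 0
    · have : ∀ r ∈ auxAnn R n v, r • x = 0 := by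
        intro r hr
        apply hann r
        intro i hi
        rcases Nat.lt_succ_iff_lt_or_eq.1 hi with hi | rfl
        · exact hr i hi
        · exact hc r hr
      obtain ⟨d, hd, hx⟩ := ih hv' x h hx this
      refine ⟨fun i => if i < n then d i else 0, ?_, ?_⟩
      · intro i
        dsimp only
        split_ifs
        · exact hd i
        · exact Submodule.zero_mem _
      · rw [Finset.sum_range_succ, hx]
        simp only [lt_irrefl, if_false, LinearMap.zero_apply, add_zero]
        refine Finset.sum_congr rfl fun i hi => ?_
        rw [if_pos (Finset.mem_range.1 hi)]
    · push Not at hc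
      obtain ⟨r₀, hr₀, hne⟩ := hc
      have hvn := hv n (by omega)
      choose s hs hsx using aux_transitive ℛ 𝒱 hR hV hsimple n v γ hv' (v n) (γ n) hvn r₀ hr₀ hne
      have key0 : ∀ r ∈ auxAnn R n v, r • v n = 0 → r • x = 0 := by
        intro r hr h0
        apply hann r
        intro i hi
        rcases Nat.lt_succ_iff_lt_or_eq.1 hi with hi | rfl
        · exact hr i hi
        · exact h0
      have key : ∀ r ∈ auxAnn R n v, r • x = s (r • v n) • x := by
        intro r hr
        have := key0 (r - s (r • v n)) (Submodule.sub_mem _ hr (hs _))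
          (by rw [sub_smul, hsx, sub_self])
        rwa [sub_smul, sub_eq_zero] at this
      let φ : Module.End R V :=
        { toFun := fun y => s y • x
          map_add' := by
            intro y z
            have := key (s y + s z) (Submodule.add_mem _ (hs y) (hs z))
            rw [add_smul, add_smul, hsx, hsx] at this
            exact this.symm
          map_smul' := by
            intro c y
            have := key (c * s y) (Submodule.smul_mem _ c (hs y))
            rw [mul_smul, mul_smul, hsx] at this
            simpa using this.symm }
      have hφ : ∀ y, φ y = s y • x := fun y => rfl
      have hφd : φ ∈ DGrading F (R := R) 𝒱 ((γ n)⁻¹ * h) := by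
        obtain ⟨q, p, hq1, hq4, hp1, hp2, hp4, hqp⟩ := aux_projs ℛ 𝒱 hR hV
        intro g y hy
        have hq : q (g * (γ n)⁻¹) (s y) ∈ auxAnn R n v := by
          intro i hi
          rw [← hqp _ (γ i) (v i) (hv' i hi), hs y i hi, map_zero]
        have h1 : q (g * (γ n)⁻¹) (s y) • v n = y := by
          rw [← hqp _ (γ n) (v n) hvn, hsx, inv_mul_cancel_right, hp2 g y hy]
        have h2 := key _ hq
        rw [h1] at h2
        rw [hφ, ← h2, ← mul_assoc]
        exact hV.2 _ _ _ (hq1 _ _) _ hx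
      have hφD : φ ∈ Dgr F (R := R) 𝒱 := Submodule.mem_iSup_of_mem _ hφd
      have hx' : x - φ (v n) ∈ 𝒱 h := by
        refine Submodule.sub_mem _ hx ?_
        have := hφd _ _ hvn
        rwa [mul_inv_cancel_left] at this
      obtain ⟨d, hd, hxd⟩ := ih hv' (x - φ (v n)) h hx' (by
        intro r hr
        rw [smul_sub, ← map_smul, hφ, key r hr, sub_self])
      refine ⟨fun i => if i < n then d i else φ, ?_, ?_⟩
      · intro i
        dsimp only
        split_ifs
        · exact hd i
        · exact hφD
      · rw [Finset.sum_range_succ]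
        simp only [lt_irrefl, if_false]
        rw [← sub_eq_iff_eq_add, hxd]
        refine Finset.sum_congr rfl fun i hi => ?_
        rw [if_pos (Finset.mem_range.1 hi)]

/-- triangular (independent) homogeneous families -/
def auxTri (F : Type*) [Field F] {G : Type*} [Group G] [DecidableEq G]
    (R : Type*) [Ring R] [Algebra F R]
    {V : Type*} [AddCommGroup V] [Module F V] [Module R V]
    (𝒱 : G → Submodule F V) (n : ℕ) (v : ℕ → V) (γ : ℕ → G) : Prop :=
  (∀ i < n, v i ∈ 𝒱 (γ i)) ∧ ∀ k < n, ∃ r ∈ auxAnn R k v, r • v k ≠ 0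

theorem aux_density (ℛ : G → Submodule F R) (𝒱 : G → Submodule F V)
    (hR : IsAlgGrading F ℛ) (hV : IsModuleGrading F ℛ 𝒱)
    (hsimple : IsGradedSimpleModule F (R := R) 𝒱) (v : ℕ → V) (γ : ℕ → G) (n : ℕ) 
    (ht : auxTri F R 𝒱 n v γ) (w : ℕ → V) : ∃ r : R, ∀ i < n, r • v i = w i := by
  induction n with
  | zero => exact ⟨0, by intro i hi; omega⟩
  | succ n ih =>
    obtain ⟨r, hr⟩ := ih ⟨fun i hi => ht.1 i (by omega), fun i hi => ht.2 i (by omega)⟩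
    obtain ⟨r₀, hr₀, hne⟩ := ht.2 n (by omega)
    obtain ⟨s, hs, hsx⟩ := aux_transitive ℛ 𝒱 hR hV hsimple n v γ (fun i hi => ht.1 i (by omega))
      (v n) (γ n) (ht.1 n (by omega)) r₀ hr₀ hne (w n - r • v n)
    refine ⟨r + s, fun i hi => ?_⟩
    rw [add_smul]
    rcases Nat.lt_succ_iff_lt_or_eq.1 hi with hi | rfl
    · rw [hr i hi, hs i hi, add_zero]
    · rw [hsx]; abel

theorem aux_lift_eq (f : FreeAlgebra F ℕ) (r : ℕ → R) :
    FreeAlgebra.lift F r f = 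
      (FreeAlgebra.equivMonoidAlgebraFreeMonoid f).coeff.sum
        fun m c => c • FreeMonoid.lift r m := by
  have h : (FreeAlgebra.lift F r) = (MonoidAlgebra.lift F R (FreeMonoid ℕ) (FreeMonoid.lift r)).comp
      (FreeAlgebra.equivMonoidAlgebraFreeMonoid (R := F) (X := ℕ)).toAlgHom := by
    apply FreeAlgebra.hom_ext
    funext i
    simp [FreeAlgebra.equivMonoidAlgebraFreeMonoid]
  rw [h]
  simp [MonoidAlgebra.lift_apply]

theorem aux_pi (𝒱 : G → Submodule F V) (hPI : SatisfiesPI F (R := R)) :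
    ∃ n : ℕ, ∀ v : ℕ → V, v 0 ≠ 0 →
      ¬ (∀ w : ℕ → V, ∃ r : R, ∀ i < n, r • v i = w i) := by
  classical
  obtain ⟨f, hf, hPI⟩ := hPI
  have hf' : (FreeAlgebra.equivMonoidAlgebraFreeMonoid f).coeff ≠ 0 := by
    simpa using hf
  obtain ⟨m, hm⟩ := Finsupp.ne_iff.1 hf'
  refine ⟨m.toList.length + 1, fun v hv0 hd => ?_⟩
  set L := m.toList with hL
  obtain ⟨s, hs⟩ := hd fun i => if i = 0 then v 0 else 0
  have hr : ∀ k : ℕ, ∃ r : R, r • v 0 = 0 ∧ ∀ j (hj : j < L.length),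
      r • v (j + 1) = if L[j] = k then v j else 0 := by
    intro k
    obtain ⟨r, hr⟩ := hd fun i => if i = 0 then 0 else if L[i - 1]? = some k then v (i - 1) else 0
    refine ⟨r, by simpa using hr 0 (by omega), fun j hj => ?_⟩
    rw [hr (j + 1) (by omega)]
    simp [hj]
  choose r hr0 hr1 using hr
  have key : ∀ (l : List ℕ) (j : ℕ), j ≤ L.length →
      s • (l.map r).prod • v j = if l = L.take j then v 0 else 0 := by
    intro l
    induction l using List.reverseRecOn with
    | nil =>
      intro j hj
      simp only [List.map_nil, List.prod_nil, one_smul]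
      rw [hs j (by omega)]
      rcases j with _ | j
      · simp
      · have : L ≠ [] := by rintro h; simp [h] at hj
        simp [this]
    | append_singleton l k ih =>
      intro j hj
      rw [List.map_append, List.prod_append, List.map_singleton, List.prod_singleton, mul_smul]
      rcases j with _ | j
      · rw [hr0]; simp
      · rw [hr1 k j (by omega)]
        have e : L.take (j + 1) = L.take j ++ [L[j]] := by simp
        rw [e]
        split_ifs with h1 h2 h2
        · rw [ih j (by omega), if_pos]
          exact (List.append_inj' h2 rfl).1
        · rw [ih j (by omega), if_neg]
          rintro rfl
          exact h2 (by rw [h1])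
        · have := (List.append_inj' h2 rfl).2
          simp at this
          exact absurd this.symm h1
        · simp
  have h0 := hPI r
  rw [aux_lift_eq] at h0
  have h1 : s • (0 : R) • v L.length = 0 := by simp
  rw [← h0, Finsupp.sum, Finset.sum_smul, Finset.smul_sum, Finset.sum_eq_single m] at h1
  · rw [smul_assoc, smul_comm, FreeMonoid.lift_apply, key _ _ le_rfl, if_pos (by simp [hL])] at h1
    rcases smul_eq_zero.1 h1 with h | h
    · exact hm h
    · exact hv0 h
  · intro b _ hb
    rw [smul_assoc, smul_comm, FreeMonoid.lift_apply, key _ _ le_rfl, if_neg, smul_zero]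
    rw [List.take_length]
    intro h
    exact hb (FreeMonoid.toList.injective h)
  · intro h
    exact absurd (Finsupp.mem_support_iff.2 hm) h

theorem aux_max (ℛ : G → Submodule F R) (𝒱 : G → Submodule F V)
    (hR : IsAlgGrading F ℛ) (hV : IsModuleGrading F ℛ 𝒱)
    (hsimple : IsGradedSimpleModule F (R := R) 𝒱) (hPI : SatisfiesPI F (R := R)) :
    ∃ n v γ, auxTri F R 𝒱 n v γ ∧
      ∀ (x : V) (h : G), x ∈ 𝒱 h → ∀ r ∈ auxAnn R n v, r • x = 0 := by
  by_contra hcon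
  push Not at hcon
  have all : ∀ n, ∃ v γ, auxTri F R 𝒱 n v γ := by
    intro n
    induction n with
    | zero => exact ⟨0, 1, by intro i hi; omega, by intro i hi; omega⟩
    | succ n ih =>
      obtain ⟨v, γ, ht⟩ := ih
      obtain ⟨x, h, hx, r, hr, hne⟩ := hcon n v γ ht
      have hlt : ∀ k ≤ n, auxAnn R k (fun i => if i < n then v i else x) = auxAnn R k v := by
        intro k hk
        ext a
        constructor
        · intro ha i hi
          have := ha i hi
          simpa [show i < n by omega] using this
        · intro ha i hi
          have := ha i hi
          simpa [show i < n by omega] using this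
      refine ⟨fun i => if i < n then v i else x, fun i => if i < n then γ i else h, ?_, ?_⟩
      · intro i hi
        dsimp only
        split_ifs with h1
        · exact ht.1 i h1
        · exact hx
      · intro k hk
        rw [hlt k (by omega)]
        rcases Nat.lt_succ_iff_lt_or_eq.1 hk with hk | rfl
        · simpa [hk] using ht.2 k hk
        · simpa using ⟨r, hr, hne⟩
  obtain ⟨n, hn⟩ := aux_pi (F := F) (R := R) 𝒱 hPI
  obtain ⟨v, γ, ht⟩ := all (n + 1)
  refine hn v ?_ fun w => ?_
  · obtain ⟨r, _, hr⟩ := ht.2 0 (by omega)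
    intro h
    rw [h, smul_zero] at hr
    exact hr rfl
  · obtain ⟨r, hr⟩ := aux_density ℛ 𝒱 hR hV hsimple v γ (n + 1) ht w
    exact ⟨r, fun i hi => hr i (by omega)⟩

end Helpers

/-- Let `R` be an associative `G`-graded `F`-algebra, `V` a graded simple faithful left
`R`-module, `D = End_R^gr(V)` and `ψ : R → End_D^gr(V)`, `ψ(r)(v) = r • v`.  If `R` satisfies an
ordinary polynomial identity then `V` is a finite-dimensional graded vector space over `D`;
moreover `End_D^gr(V) = End_D(V)` and `ψ` is an isomorphism of graded algebras onto `End_D(V)`. -/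
theorem findim_over_D_of_PI
    {F : Type*} [Field F] {G : Type*} [Group G] [DecidableEq G]
    {R : Type*} [Ring R] [Algebra F R]
    {V : Type*} [AddCommGroup V] [Module F V] [Module R V] [IsScalarTower F R V]
    [SMulCommClass R F V]
    (ℛ : G → Submodule F R) (𝒱 : G → Submodule F V)
    (hR : IsAlgGrading F ℛ) (hV : IsModuleGrading F ℛ 𝒱)
    (hsimple : IsGradedSimpleModule F (R := R) 𝒱)
    (hfaithful : ∀ r : R, (∀ x : V, r • x = 0) → r = 0)
    (hPI : SatisfiesPI F (R := R)) :
    -- `V` is finite-dimensional over `D`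
    (∃ (n : ℕ) (b : Fin n → V), ∀ w : V, ∃ d : Fin n → Module.End R V,
        (∀ i, d i ∈ Dgr F (R := R) 𝒱) ∧ w = ∑ i, d i (b i)) ∧
    -- `End_D^gr(V) = End_D(V)`
    (EndD F (R := R) 𝒱 = ⨆ h : G, EndD F (R := R) 𝒱 ⊓ endVGrading F 𝒱 h) ∧
    -- `ψ` is injective,
    (Function.Injective (Module.toModuleEnd F V : R →+* Module.End F V)) ∧
    -- surjective onto `End_D(V)`,
    (∀ f : Module.End F V,
        f ∈ EndD F (R := R) 𝒱 ↔ ∃ r : R, Module.toModuleEnd F V r = f) ∧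
    -- and graded
    (∀ g : G, ∀ r ∈ ℛ g, (Module.toModuleEnd F V r : Module.End F V) ∈ endVGrading F 𝒱 g) := by
  obtain ⟨n, v, γ, ht, hmax⟩ := aux_max ℛ 𝒱 hR hV hsimple hPI
  have hspan : ∀ w : V, auxSpan F R 𝒱 n v w := by
    intro w
    have hw : w ∈ ⨆ g, 𝒱 g := by rw [hV.1.submodule_iSup_eq_top]; trivial
    induction hw using Submodule.iSup_induction' with
    | mem g x hx => exact aux_closure ℛ 𝒱 hR hV hsimple v γ n ht.1 x g hx (hmax x g hx)
    | zero => exact ⟨0, fun i => Submodule.zero_mem _, by simp⟩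
    | add a b _ _ ha hb =>
      obtain ⟨d, hd, rfl⟩ := ha
      obtain ⟨e, he, rfl⟩ := hb
      exact ⟨d + e, fun i => Submodule.add_mem _ (hd i) (he i), by
        simp [Finset.sum_add_distrib]⟩
  have hsurj : ∀ f : Module.End F V,
        f ∈ EndD F (R := R) 𝒱 ↔ ∃ r : R, Module.toModuleEnd F V r = f := by
    intro f
    constructor
    · intro hf
      obtain ⟨r, hr⟩ := aux_density ℛ 𝒱 hR hV hsimple v γ n ht fun i => f (v i)
      refine ⟨r, ?_⟩
      ext w
      obtain ⟨d, hd, rfl⟩ := hspan w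
      rw [map_sum, map_sum]
      refine Finset.sum_congr rfl fun i hi => ?_
      rw [hf _ (hd i), ← hr i (Finset.mem_range.1 hi), map_smul]
      rfl
    · rintro ⟨r, rfl⟩ d _ x
      exact (map_smul d r x).symm
  have hgr : ∀ g : G, ∀ r ∈ ℛ g,
      (Module.toModuleEnd F V r : Module.End F V) ∈ endVGrading F 𝒱 g :=
    fun g r hr h x hx => hV.2 g h r hr x hx
  refine ⟨⟨n, fun i => v i, fun w => ?_⟩, ?_, ?_, hsurj, hgr⟩
  · obtain ⟨d, hd, hw⟩ := hspan w
    exact ⟨fun i => d i, fun i => hd i, by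
      rw [hw, Finset.sum_range]⟩
  · apply le_antisymm
    · intro f hf
      obtain ⟨r, rfl⟩ := (hsurj f).1 hf
      obtain ⟨q, p, hq1, hq4, -⟩ := aux_projs ℛ 𝒱 hR hV
      obtain ⟨S, hS⟩ := hq4 r
      rw [hS, map_sum]
      exact Submodule.sum_mem _ fun g _ => Submodule.mem_iSup_of_mem g
        ⟨(hsurj _).2 ⟨_, rfl⟩, hgr g _ (hq1 g r)⟩
    · exact iSup_le fun g => inf_le_left
  · rw [injective_iff_map_eq_zero]
    intro r hr
    exact hfaithful r fun x => LinearMap.congr_fun hr x
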